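/- Let α ∈ ℝ, β < 0, σ > 0, fix s > 0, and let g : ℝ → ℝ be continuous with |g(ξ)| ≤ C·exp(c·|ξ|) for some constants C, c > 0. Define u(t,x) := ∫_ℝ G(t,s;x,ξ)·g(ξ) dξ for 0 ≤ t < s and x ∈ ℝ, where G is the Vasicek Green's function. Then the integral converges absolutely for every such (t,x), u is of class C^{1,2} on [0,s) × ℝ, u satisfies ∂ₜu(t,x) + (α + βx)·∂ₓu(t,x) + (σ²/2)·∂²ₓₓu(t,x) − x·u(t,x) = 0 for all (t,x) ∈ [0,s) × ℝ, and lim_{t↑s} u(t,x) = g(x) for every x ∈ ℝ. -/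

import Mathlib

/-- Squared width `Σ(t,s)²` of the Vasicek Green's function. -/
noncomputable def vasicekSigmaSq (β σ t s : ℝ) : ℝ :=
  -(σ ^ 2 / (2 * β)) * (1 - Real.exp (2 * β * (s - t)))

/-- Mean `μ(t,s;x)` of the Vasicek Green's function. -/
noncomputable def vasicekMu (α β σ t s x : ℝ) : ℝ :=
  x * Real.exp (β * (s - t)) - (α / β) * (1 - Real.exp (β * (s - t))) +
    (σ ^ 2 / (2 * β ^ 2)) *
      (Real.exp (-(β * (s - t))) + Real.exp (β * (s - t)) - 2)

/-- Factor `C₁(t,s;ξ)` of the Vasicek Green's function. -/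
noncomputable def vasicekC1 (α β σ t s ξ : ℝ) : ℝ :=
  Real.exp (-((σ ^ 2 * Real.exp (-(2 * β * (s - t)))
      - 4 * ξ * β ^ 2 * Real.exp (-(β * (s - t)))
      - 4 * σ ^ 2 * Real.exp (-(β * (s - t)))
      - 4 * α * β * Real.exp (-(β * (s - t)))) / (4 * β ^ 3)))

/-- Factor `C₂(t,s;ξ)` of the Vasicek Green's function. -/
noncomputable def vasicekC2 (α β σ t s ξ : ℝ) : ℝ :=
  Real.exp ((σ ^ 2 / (2 * β ^ 2) + α / β) * (s - t)
    - 3 * σ ^ 2 / (4 * β ^ 3) - ξ / β - α / β ^ 2)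

/-- The Vasicek Green's function
`G(t,s;x,ξ) = C₁C₂/(√(2π)Σ) · exp(−(ξ−μ)²/(2Σ²))`. -/
noncomputable def vasicekG (α β σ t s x ξ : ℝ) : ℝ :=
  vasicekC1 α β σ t s ξ * vasicekC2 α β σ t s ξ /
    (Real.sqrt (2 * Real.pi) * Real.sqrt (vasicekSigmaSq β σ t s)) *
    Real.exp (-((ξ - vasicekMu α β σ t s x) ^ 2 / (2 * vasicekSigmaSq β σ t s)))

/-- `f` is of class `C^{1,2}` on `I × ℝ`: it is jointly continuous there, once
continuously differentiable in the time variable and twice continuously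
differentiable in the space variable. -/
def C12On (f : ℝ → ℝ → ℝ) (I : Set ℝ) : Prop :=
  ContinuousOn (fun p : ℝ × ℝ => f p.1 p.2) (I ×ˢ (Set.univ : Set ℝ)) ∧
  (∀ x : ℝ, ∀ t ∈ I, DifferentiableAt ℝ (fun s => f s x) t) ∧
  (∀ t ∈ I, ContDiff ℝ 2 (fun x => f t x)) ∧
  ContinuousOn (fun p : ℝ × ℝ => deriv (fun s => f s p.2) p.1) (I ×ˢ (Set.univ : Set ℝ)) ∧
  ContinuousOn (fun p : ℝ × ℝ => deriv (fun x => f p.1 x) p.2) (I ×ˢ (Set.univ : Set ℝ)) ∧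
  ContinuousOn (fun p : ℝ × ℝ => deriv (deriv (fun x => f p.1 x)) p.2) (I ×ˢ (Set.univ : Set ℝ))

/-!
The Vasicek Green's function factors as `G(t,s;x,ξ) = P(t,x) φ(ξ)`, where
`P(t,x) = exp (A(t) + B(t) x)` is the price of a zero-coupon bond and `φ` is the density of a
Gaussian law whose mean `M(t,x)` is affine in `x` and whose variance is `Σ(t,s)²`. Hence
`u(t,x) = P(t,x) H(M(t,x), Σ(t,s)²)`, where `H(m,v)` is the expectation of `g` under `N(m,v)`.
The function `H` is smooth for `v > 0`, solves the heat equation `∂ᵥH = ½ ∂ₘₘH`, and tends to `g`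
as `v → 0`; the equation for `u` then reduces to the Riccati equations for `A` and `B` and the
transport equation for `M`.
-/

open MeasureTheory ProbabilityTheory Filter Set Topology

/-! ### Gaussian expectations of functions of exponential growth -/

/-- Exponential growth, `|g ξ| ≤ C e^{c|ξ|}`: the class of data for which Gaussian expectations
are finite and depend smoothly on mean and variance. -/
def HasExpGrowth (g : ℝ → ℝ) : Prop :=
  ∃ C c : ℝ, ∀ ξ, |g ξ| ≤ C * Real.exp (c * |ξ|)

lemma integrable_exp_mul_abs_sub_mul_sq (k : ℝ) {a : ℝ} (ha : 0 < a) :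
    Integrable fun ξ : ℝ => Real.exp (k * |ξ| - a * ξ ^ 2) := by
  refine ((integrable_exp_neg_mul_sq (half_pos ha)).const_mul (Real.exp (k ^ 2 / (2 * a)))).mono'
    (by fun_prop) (ae_of_all _ fun ξ => ?_)
  have completed_square : k ^ 2 / (2 * a) + -(a / 2) * ξ ^ 2 - (k * |ξ| - a * ξ ^ 2)
      = (k - a * |ξ|) ^ 2 / (2 * a) := by
    rw [← sq_abs ξ]
    field_simp
    ring
  have : 0 ≤ (k - a * |ξ|) ^ 2 / (2 * a) := by positivity
  rw [Real.norm_eq_abs, Real.abs_exp, ← Real.exp_add]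
  gcongr
  linarith

namespace HasExpGrowth

variable {g : ℝ → ℝ}

lemma exists_nonneg (hg : HasExpGrowth g) :
    ∃ C c : ℝ, 0 ≤ C ∧ 0 ≤ c ∧ ∀ ξ, |g ξ| ≤ C * Real.exp (c * |ξ|) := by
  obtain ⟨C, c, hCc⟩ := hg
  have hC : 0 ≤ C := by simpa using (abs_nonneg _).trans (hCc 0)
  exact ⟨C, |c|, hC, abs_nonneg c, fun ξ => (hCc ξ).trans (by gcongr; exact le_abs_self c)⟩

lemma id_mul (hg : HasExpGrowth g) : HasExpGrowth fun ξ => ξ * g ξ := by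
  obtain ⟨C, c, hCc⟩ := hg
  refine ⟨C, c + 1, fun ξ => ?_⟩
  have abs_le_exp : |ξ| ≤ Real.exp |ξ| := by linarith [Real.add_one_le_exp |ξ|]
  calc |ξ * g ξ| = |ξ| * |g ξ| := abs_mul ..
    _ ≤ Real.exp |ξ| * (C * Real.exp (c * |ξ|)) := by gcongr; exact hCc ξ
    _ = C * Real.exp ((c + 1) * |ξ|) := by rw [add_mul, one_mul, Real.exp_add]; ring

lemma exists_integrable_bound (hg : HasExpGrowth g) (b : ℝ) {a : ℝ} (ha : 0 < a) :
    ∃ bound : ℝ → ℝ, Integrable bound ∧ ∀ p q ξ : ℝ, |p| ≤ b → a ≤ q →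
      ‖Real.exp (p * ξ - q * ξ ^ 2) * g ξ‖ ≤ bound ξ := by
  obtain ⟨C, c, hCc⟩ := hg
  refine ⟨_, (integrable_exp_mul_abs_sub_mul_sq (b + c) ha).const_mul C, fun p q ξ hp hq => ?_⟩
  have hpξ : p * ξ ≤ b * |ξ| := by
    calc p * ξ ≤ |p| * |ξ| := (le_abs_self _).trans_eq (abs_mul ..)
      _ ≤ b * |ξ| := by gcongr
  calc ‖Real.exp (p * ξ - q * ξ ^ 2) * g ξ‖ = Real.exp (p * ξ - q * ξ ^ 2) * |g ξ| := by
        rw [norm_mul, Real.norm_eq_abs, Real.abs_exp, Real.norm_eq_abs]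
    _ ≤ Real.exp (b * |ξ| - a * ξ ^ 2) * (C * Real.exp (c * |ξ|)) := by gcongr; exact hCc ξ
    _ = C * Real.exp ((b + c) * |ξ| - a * ξ ^ 2) := by
        rw [mul_left_comm, ← Real.exp_add]
        ring_nf

end HasExpGrowth

/-- The Laplace transform of `g` against the sufficient statistic `(ξ, -ξ²)` of the Gaussian
exponential family. Its derivatives in `p` and `q` only multiply `g` by `ξ` and `-ξ²`, which is
why Gaussian expectations are differentiated in these coordinates. -/
noncomputable def gaussLaplace (g : ℝ → ℝ) (p q : ℝ) : ℝ :=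
  ∫ ξ : ℝ, Real.exp (p * ξ - q * ξ ^ 2) * g ξ

lemma hasFDerivAt_exp_quadratic_mul (y ξ : ℝ) (z : ℝ × ℝ) :
    HasFDerivAt (fun z : ℝ × ℝ => Real.exp (z.1 * ξ - z.2 * ξ ^ 2) * y)
      ((Real.exp (z.1 * ξ - z.2 * ξ ^ 2) * (ξ * y)) • ContinuousLinearMap.fst ℝ ℝ ℝ
        - (Real.exp (z.1 * ξ - z.2 * ξ ^ 2) * (ξ * (ξ * y))) • ContinuousLinearMap.snd ℝ ℝ ℝ)
      z := by
  have hexponent : HasFDerivAt (fun z : ℝ × ℝ => z.1 * ξ - z.2 * ξ ^ 2)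
      (ξ • ContinuousLinearMap.fst ℝ ℝ ℝ - ξ ^ 2 • ContinuousLinearMap.snd ℝ ℝ ℝ) z :=
    (hasFDerivAt_fst.mul_const ξ).sub (hasFDerivAt_snd.mul_const (ξ ^ 2))
  refine (hexponent.exp.mul_const y).congr_fderiv ?_
  module

section GaussLaplace

variable {g : ℝ → ℝ} (hg : Measurable g) (hgrow : HasExpGrowth g)
include hg hgrow

lemma integrable_exp_quadratic_mul (p : ℝ) {q : ℝ} (hq : 0 < q) :
    Integrable fun ξ : ℝ => Real.exp (p * ξ - q * ξ ^ 2) * g ξ := by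
  obtain ⟨bound, hbound, hle⟩ := hgrow.exists_integrable_bound |p| hq
  exact hbound.mono' (by fun_prop) (ae_of_all _ fun ξ => hle p q ξ le_rfl le_rfl)

lemma hasFDerivAt_gaussLaplace (p : ℝ) {q : ℝ} (hq : 0 < q) :
    HasFDerivAt (fun z : ℝ × ℝ => gaussLaplace g z.1 z.2)
      (gaussLaplace (fun ξ => ξ * g ξ) p q • ContinuousLinearMap.fst ℝ ℝ ℝ
        - gaussLaplace (fun ξ => ξ * (ξ * g ξ)) p q • ContinuousLinearMap.snd ℝ ℝ ℝ) (p, q) := by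
  have hg₁ : Measurable fun ξ => ξ * g ξ := by fun_prop
  have hg₂ : Measurable fun ξ => ξ * (ξ * g ξ) := by fun_prop
  obtain ⟨bound₁, hbound₁, hle₁⟩ :=
    hgrow.id_mul.exists_integrable_bound (|p| + q / 2) (half_pos hq)
  obtain ⟨bound₂, hbound₂, hle₂⟩ :=
    hgrow.id_mul.id_mul.exists_integrable_bound (|p| + q / 2) (half_pos hq)
  refine (hasFDerivAt_integral_of_dominated_of_fderiv_le (𝕜 := ℝ) (x₀ := (p, q))
    (s := Metric.ball (p, q) (q / 2)) (bound := fun ξ => bound₁ ξ + bound₂ ξ)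
    (F := fun (z : ℝ × ℝ) (ξ : ℝ) => Real.exp (z.1 * ξ - z.2 * ξ ^ 2) * g ξ)
    (F' := fun (z : ℝ × ℝ) (ξ : ℝ) =>
      (Real.exp (z.1 * ξ - z.2 * ξ ^ 2) * (ξ * g ξ)) • ContinuousLinearMap.fst ℝ ℝ ℝ
        - (Real.exp (z.1 * ξ - z.2 * ξ ^ 2) * (ξ * (ξ * g ξ))) • ContinuousLinearMap.snd ℝ ℝ ℝ)
    (Metric.ball_mem_nhds _ (half_pos hq)) (.of_forall fun z => by fun_prop)
    (integrable_exp_quadratic_mul hg hgrow p hq) (by fun_prop)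
    (ae_of_all _ fun ξ z hz => ?_) (hbound₁.add hbound₂)
    (ae_of_all _ fun ξ z _ => hasFDerivAt_exp_quadratic_mul (g ξ) ξ z)).congr_fderiv ?_
  · have hz' : |z.1 - p| < q / 2 ∧ |z.2 - q| < q / 2 := by
      simpa [Prod.dist_eq, Real.dist_eq] using hz
    have hp : |z.1| ≤ |p| + q / 2 := by linarith [abs_sub_abs_le_abs_sub z.1 p]
    have hq' : q / 2 ≤ z.2 := by linarith [(abs_lt.1 hz'.2).1]
    refine (norm_sub_le _ _).trans (add_le_add ?_ ?_)
    · simpa only [norm_smul, ContinuousLinearMap.norm_fst, mul_one] using hle₁ _ _ ξ hp hq'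
    · simpa only [norm_smul, ContinuousLinearMap.norm_snd, mul_one] using hle₂ _ _ ξ hp hq'
  · rw [integral_sub, integral_smul_const, integral_smul_const]
    · rfl
    · exact (integrable_exp_quadratic_mul hg₁ hgrow.id_mul p hq).smul_const _
    · exact (integrable_exp_quadratic_mul hg₂ hgrow.id_mul.id_mul p hq).smul_const _

lemma hasDerivAt_gaussLaplace_comp {p q : ℝ → ℝ} {p' q' t : ℝ} (hp : HasDerivAt p p' t)
    (hq : HasDerivAt q q' t) (hqt : 0 < q t) :
    HasDerivAt (fun r => gaussLaplace g (p r) (q r))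
      (gaussLaplace (fun ξ => ξ * g ξ) (p t) (q t) * p'
        - gaussLaplace (fun ξ => ξ * (ξ * g ξ)) (p t) (q t) * q') t := by
  simpa [Function.comp_def] using
    (hasFDerivAt_gaussLaplace hg hgrow (p t) hqt).comp_hasDerivAt t (hp.prodMk hq)

end GaussLaplace

/-- The expectation of `g` under the Gaussian law of mean `m` and variance `v`, that is, the heat
semigroup applied to `g`. The variance is a real number so that one can differentiate in it; for
`v ≤ 0` the law is the Dirac mass at `m`. -/
noncomputable def gaussianMean (g : ℝ → ℝ) (m v : ℝ) : ℝ :=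
  ∫ ξ, g ξ ∂gaussianReal m v.toNNReal

/-- The derivative of `gaussianMean g m v` in the mean `m`, for `v > 0`. -/
noncomputable def gaussianMeanDeriv (g : ℝ → ℝ) (m v : ℝ) : ℝ :=
  (gaussianMean (fun ξ => ξ * g ξ) m v - m * gaussianMean g m v) / v

/-- The second derivative of `gaussianMean g m v` in the mean `m`, for `v > 0`. -/
noncomputable def gaussianMeanDeriv₂ (g : ℝ → ℝ) (m v : ℝ) : ℝ :=
  (gaussianMeanDeriv (fun ξ => ξ * g ξ) m v - m * gaussianMeanDeriv g m v - gaussianMean g m v) / v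

lemma gaussianPDFReal_toNNReal_eq (m : ℝ) {v : ℝ} (hv : 0 < v) (ξ : ℝ) :
    gaussianPDFReal m v.toNNReal ξ = (√(2 * Real.pi * v))⁻¹ * Real.exp (-m ^ 2 / (2 * v))
      * Real.exp (m / v * ξ - 1 / (2 * v) * ξ ^ 2) := by
  rw [gaussianPDFReal, Real.coe_toNNReal _ hv.le, mul_assoc (√_)⁻¹, ← Real.exp_add]
  congr 2
  field_simp
  ring

lemma gaussianPDFReal_mul_exp (m k : ℝ) {v : ℝ} (hv : 0 < v) (ξ : ℝ) :
    Real.exp (k * (ξ - m) - k ^ 2 * v / 2) * gaussianPDFReal m v.toNNReal ξ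
      = gaussianPDFReal (m + k * v) v.toNNReal ξ := by
  simp only [gaussianPDFReal, Real.coe_toNNReal _ hv.le]
  rw [mul_left_comm, ← Real.exp_add]
  congr 2
  field_simp
  ring

lemma gaussianMean_eq_integral_pdf (g : ℝ → ℝ) (m : ℝ) {v : ℝ} (hv : 0 < v) :
    gaussianMean g m v = ∫ ξ, gaussianPDFReal m v.toNNReal ξ * g ξ :=
  integral_gaussianReal_eq_integral_smul (Real.toNNReal_pos.2 hv).ne'

lemma gaussianMean_eq_gaussLaplace (g : ℝ → ℝ) (m : ℝ) {v : ℝ} (hv : 0 < v) :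
    gaussianMean g m v = (√(2 * Real.pi * v))⁻¹ * Real.exp (-m ^ 2 / (2 * v))
      * gaussLaplace g (m / v) (1 / (2 * v)) := by
  simp only [gaussianMean_eq_integral_pdf g m hv, gaussianPDFReal_toNNReal_eq m hv, mul_assoc,
    integral_const_mul, gaussLaplace]

section GaussianMean

variable {g : ℝ → ℝ} (hg : Measurable g)
include hg

lemma gaussianMean_eq_integral_standard (m v : ℝ) :
    gaussianMean g m v = ∫ z, g (m + √v * z) ∂gaussianReal 0 1 := by
  have hlaw : HasLaw (fun z => m + √v * z) (gaussianReal m v.toNNReal) (gaussianReal 0 1) := by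
    have hvar : NNReal.mk (√v ^ 2) (sq_nonneg _) * 1 = v.toNNReal :=
      NNReal.eq (by simp [Real.sq_sqrt'])
    have hscaled := gaussianReal_const_add (gaussianReal_const_mul
      (HasLaw.id (μ := gaussianReal 0 1)) √v) m
    rwa [mul_zero, zero_add, hvar] at hscaled
  exact (hlaw.integral_comp hg.aestronglyMeasurable).symm

variable (hgrow : HasExpGrowth g)
include hgrow

lemma integrable_gaussianPDFReal_mul (m : ℝ) {v : ℝ} (hv : 0 < v) :
    Integrable fun ξ => gaussianPDFReal m v.toNNReal ξ * g ξ := by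
  simp only [gaussianPDFReal_toNNReal_eq m hv, mul_assoc]
  exact ((integrable_exp_quadratic_mul hg hgrow _ (by positivity)).const_mul _).const_mul _

/-- The factor `1 / 2` in front of the variance term is the heat equation. -/
lemma hasDerivAt_gaussianMean_comp {m v : ℝ → ℝ} {m' v' t : ℝ} (hm : HasDerivAt m m' t)
    (hv : HasDerivAt v v' t) (hvt : 0 < v t) :
    HasDerivAt (fun r => gaussianMean g (m r) (v r))
      (gaussianMeanDeriv g (m t) (v t) * m' + 1 / 2 * gaussianMeanDeriv₂ g (m t) (v t) * v') t := by
  have hnormalizer : HasDerivAt (fun r => (√(2 * Real.pi * v r))⁻¹)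
      (-(√(2 * Real.pi * v t))⁻¹ * v' / (2 * v t)) t := by
    refine ((hv.const_mul (2 * Real.pi)).sqrt (by positivity)).fun_inv (by positivity)
      |>.congr_deriv ?_
    rw [Real.sq_sqrt (by positivity)]
    field_simp
  have hexp := (((hm.fun_pow 2).fun_neg).fun_div (hv.const_mul 2) (by positivity)).exp
  have hlaplace := hasDerivAt_gaussLaplace_comp hg hgrow (hm.fun_div hv hvt.ne')
    ((hasDerivAt_const t 1).fun_div (hv.const_mul 2) (by positivity)) (by positivity)
  have heq : (fun r => gaussianMean g (m r) (v r)) =ᶠ[𝓝 t] fun r =>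
      (√(2 * Real.pi * v r))⁻¹ * Real.exp (-m r ^ 2 / (2 * v r))
        * gaussLaplace g (m r / v r) (1 / (2 * v r)) := by
    filter_upwards [hv.continuousAt.eventually_const_lt hvt] with r hr
    exact gaussianMean_eq_gaussLaplace g (m r) hr
  refine (((hnormalizer.fun_mul hexp).fun_mul hlaplace).congr_of_eventuallyEq heq).congr_deriv ?_
  simp only [gaussianMeanDeriv₂, gaussianMeanDeriv, gaussianMean_eq_gaussLaplace _ _ hvt]
  field_simp
  ring

lemma hasDerivAt_gaussianMean (m : ℝ) {v : ℝ} (hv : 0 < v) :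
    HasDerivAt (fun y => gaussianMean g y v) (gaussianMeanDeriv g m v) m := by
  simpa using hasDerivAt_gaussianMean_comp hg hgrow (hasDerivAt_id m) (hasDerivAt_const m v) hv

lemma hasDerivAt_gaussianMeanDeriv (m : ℝ) {v : ℝ} (hv : 0 < v) :
    HasDerivAt (fun y => gaussianMeanDeriv g y v) (gaussianMeanDeriv₂ g m v) m := by
  have hmean := hasDerivAt_gaussianMean hg hgrow m hv
  have hfirst := hasDerivAt_gaussianMean (g := fun ξ => ξ * g ξ) (by fun_prop) hgrow.id_mul m hv
  refine ((hfirst.fun_sub ((hasDerivAt_id' m).fun_mul hmean)).div_const v).congr_deriv ?_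
  rw [gaussianMeanDeriv₂]
  ring

lemma continuousOn_gaussianMean :
    ContinuousOn (fun z : ℝ × ℝ => gaussianMean g z.1 z.2) {z | 0 < z.2} := by
  intro z hz
  have hz2 : 0 < z.2 := hz
  have hlaplace : ContinuousAt (fun z : ℝ × ℝ => gaussLaplace g (z.1 / z.2) (1 / (2 * z.2))) z :=
    (hasFDerivAt_gaussLaplace hg hgrow (z.1 / z.2)
      (by positivity : 0 < 1 / (2 * z.2))).continuousAt.comp
        (f := fun z : ℝ × ℝ => (z.1 / z.2, 1 / (2 * z.2)))
        (by fun_prop (disch := positivity))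
  refine ContinuousWithinAt.congr (ContinuousAt.continuousWithinAt ?_)
    (fun y hy => gaussianMean_eq_gaussLaplace g y.1 hy) (gaussianMean_eq_gaussLaplace g z.1 hz)
  fun_prop (disch := positivity)

lemma continuousOn_gaussianMeanDeriv :
    ContinuousOn (fun z : ℝ × ℝ => gaussianMeanDeriv g z.1 z.2) {z | 0 < z.2} := by
  have hmean := continuousOn_gaussianMean hg hgrow
  have hfirst := continuousOn_gaussianMean (g := fun ξ => ξ * g ξ) (by fun_prop) hgrow.id_mul
  exact (hfirst.sub (continuousOn_fst.mul hmean)).div continuousOn_snd fun _ hz => ne_of_gt hz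

lemma continuousOn_gaussianMeanDeriv₂ :
    ContinuousOn (fun z : ℝ × ℝ => gaussianMeanDeriv₂ g z.1 z.2) {z | 0 < z.2} := by
  have hmean := continuousOn_gaussianMean hg hgrow
  have hderiv := continuousOn_gaussianMeanDeriv hg hgrow
  have hfirst := continuousOn_gaussianMeanDeriv (g := fun ξ => ξ * g ξ) (by fun_prop) hgrow.id_mul
  exact ((hfirst.sub (continuousOn_fst.mul hderiv)).sub hmean).div continuousOn_snd
    fun _ hz => ne_of_gt hz

lemma continuousAt_gaussianMean_zero {x : ℝ} (hx : ContinuousAt g x) :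
    ContinuousAt (fun z : ℝ × ℝ => gaussianMean g z.1 z.2) (x, 0) := by
  obtain ⟨C, c, hC, hc, hCc⟩ := hgrow.exists_nonneg
  simp only [gaussianMean_eq_integral_standard hg]
  have hint : Integrable (fun z : ℝ => Real.exp (c * |z|)) (gaussianReal 0 1) :=
    integrable_exp_mul_abs (integrable_exp_mul_gaussianReal c) (integrable_exp_mul_gaussianReal _)
  refine continuousAt_of_dominated (bound := fun z => C * Real.exp (c * (|x| + 1))
    * Real.exp (c * |z|))
    (.of_forall fun y => (by fun_prop : Measurable _).aestronglyMeasurable) ?_ (hint.const_mul _)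
    (ae_of_all _ fun z => ?_)
  · have hmean : ∀ᶠ y : ℝ × ℝ in 𝓝 (x, 0), |y.1| < |x| + 1 :=
      continuousAt_fst.abs.eventually_lt_const (lt_add_one |x|)
    have hvar : ∀ᶠ y : ℝ × ℝ in 𝓝 (x, 0), √y.2 < 1 :=
      continuousAt_snd.sqrt.eventually_lt_const (by simp)
    filter_upwards [hmean, hvar] with y hy₁ hy₂
    refine ae_of_all _ fun z => (hCc _).trans ?_
    have : |y.1 + √y.2 * z| ≤ |x| + 1 + |z| := by
      calc |y.1 + √y.2 * z| ≤ |y.1| + √y.2 * |z| := by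
            simpa [abs_mul, abs_of_nonneg (Real.sqrt_nonneg _)] using abs_add_le y.1 (√y.2 * z)
        _ ≤ |x| + 1 + 1 * |z| := by gcongr
        _ = |x| + 1 + |z| := by rw [one_mul]
    rw [mul_assoc, ← Real.exp_add, ← mul_add]
    gcongr
  · exact ContinuousAt.comp (f := fun y : ℝ × ℝ => y.1 + √y.2 * z) (by simpa using hx)
      (by fun_prop)

end GaussianMean

/-! ### The Vasicek bond price and the factorization of the Green's function -/

/-- The slope `B(t)` of the logarithm of the Vasicek bond price, as a function of the short
rate. -/
noncomputable def vasicekBondSlope (β t s : ℝ) : ℝ :=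
  (1 - Real.exp (β * (s - t))) / β

/-- The intercept `A(t)` of the logarithm of the Vasicek bond price, as a function of the short
rate. -/
noncomputable def vasicekBondIntercept (α β σ t s : ℝ) : ℝ :=
  (α / β + σ ^ 2 / (2 * β ^ 2)) * (s - t + vasicekBondSlope β t s)
    + σ ^ 2 / (4 * β) * vasicekBondSlope β t s ^ 2

/-- The price `P(t,x)` at time `t` and short rate `x` of the zero-coupon bond of maturity `s`. It
is the total mass of the Green's function. -/
noncomputable def vasicekBond (α β σ t s x : ℝ) : ℝ :=
  Real.exp (vasicekBondIntercept α β σ t s + vasicekBondSlope β t s * x)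

/-- The mean `M(t,x)` of the short rate at time `s` under the forward measure, that is, of the
Green's function normalized to total mass one. It differs from `vasicekMu`, because the factor
`C₁C₂` of the Green's function still depends exponentially on `ξ`. -/
noncomputable def vasicekForwardMean (α β σ t s x : ℝ) : ℝ :=
  x * Real.exp (β * (s - t)) - α * vasicekBondSlope β t s
    - σ ^ 2 / 2 * vasicekBondSlope β t s ^ 2

lemma exp_two_mul_mul (a b : ℝ) : Real.exp (2 * a * b) = Real.exp (a * b) ^ 2 := by
  rw [mul_assoc, two_mul, Real.exp_add, sq]

section GreenFunction

variable (α : ℝ) {β σ t s : ℝ} (x : ℝ)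

lemma vasicekSigmaSq_pos (hβ : β ≠ 0) (hσ : σ ≠ 0) (ht : t < s) : 0 < vasicekSigmaSq β σ t s := by
  have hτ : 0 < s - t := sub_pos.2 ht
  rw [vasicekSigmaSq]
  rcases hβ.lt_or_gt with hneg | hpos
  · have hexp : Real.exp (2 * β * (s - t)) < 1 :=
      Real.exp_lt_one_iff.2 (mul_neg_of_neg_of_pos (by linarith) hτ)
    have hcoeff : σ ^ 2 / (2 * β) < 0 := div_neg_of_pos_of_neg (by positivity) (by linarith)
    exact mul_pos (neg_pos.2 hcoeff) (sub_pos.2 hexp)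
  · have hexp : 1 < Real.exp (2 * β * (s - t)) := Real.one_lt_exp_iff.2 (by positivity)
    have hcoeff : 0 < σ ^ 2 / (2 * β) := by positivity
    exact mul_pos_of_neg_of_neg (neg_lt_zero.2 hcoeff) (sub_neg.2 hexp)

lemma vasicekMu_add_mul_vasicekSigmaSq (hβ : β ≠ 0) :
    vasicekMu α β σ t s x
        + vasicekBondSlope β t s / Real.exp (β * (s - t)) * vasicekSigmaSq β σ t s
      = vasicekForwardMean α β σ t s x := by
  simp only [vasicekMu, vasicekForwardMean, vasicekSigmaSq, vasicekBondSlope,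
    exp_two_mul_mul, Real.exp_neg]
  field_simp
  ring

lemma vasicekC1_mul_vasicekC2 (hβ : β ≠ 0) (ξ : ℝ) :
    vasicekC1 α β σ t s ξ * vasicekC2 α β σ t s ξ
      = vasicekBond α β σ t s x
        * Real.exp (vasicekBondSlope β t s / Real.exp (β * (s - t)) * (ξ - vasicekMu α β σ t s x)
          - (vasicekBondSlope β t s / Real.exp (β * (s - t))) ^ 2
            * vasicekSigmaSq β σ t s / 2) := by
  rw [vasicekC1, vasicekC2, vasicekBond, ← Real.exp_add, ← Real.exp_add]
  simp only [vasicekBondIntercept, vasicekMu, vasicekSigmaSq, vasicekBondSlope, Real.exp_neg,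
    exp_two_mul_mul]
  congr 1
  field_simp
  ring

lemma vasicekG_eq_vasicekBond_mul_gaussianPDFReal (hβ : β ≠ 0) (hσ : σ ≠ 0) (ht : t < s) (ξ : ℝ) :
    vasicekG α β σ t s x ξ = vasicekBond α β σ t s x
      * gaussianPDFReal (vasicekForwardMean α β σ t s x) (vasicekSigmaSq β σ t s).toNNReal ξ := by
  have hv := vasicekSigmaSq_pos hβ hσ ht
  have hdensity : vasicekG α β σ t s x ξ = vasicekC1 α β σ t s ξ * vasicekC2 α β σ t s ξ
      * gaussianPDFReal (vasicekMu α β σ t s x) (vasicekSigmaSq β σ t s).toNNReal ξ := by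
    rw [vasicekG, gaussianPDFReal, Real.coe_toNNReal _ hv.le, Real.sqrt_mul' _ hv.le, neg_div]
    ring
  rw [hdensity, vasicekC1_mul_vasicekC2 α x hβ, mul_assoc, gaussianPDFReal_mul_exp _ _ hv,
    vasicekMu_add_mul_vasicekSigmaSq α x hβ]

end GreenFunction

section Continuity

variable {X : Type*} [TopologicalSpace X] (α β σ s : ℝ) {t x : X → ℝ}

@[fun_prop]
lemma continuous_vasicekSigmaSq (ht : Continuous t) :
    Continuous fun p => vasicekSigmaSq β σ (t p) s := by
  unfold vasicekSigmaSq
  fun_prop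

@[fun_prop]
lemma continuous_vasicekBondSlope (ht : Continuous t) :
    Continuous fun p => vasicekBondSlope β (t p) s := by
  unfold vasicekBondSlope
  fun_prop

@[fun_prop]
lemma continuous_vasicekBond (ht : Continuous t) (hx : Continuous x) :
    Continuous fun p => vasicekBond α β σ (t p) s (x p) := by
  unfold vasicekBond vasicekBondIntercept
  fun_prop

@[fun_prop]
lemma continuous_vasicekForwardMean (ht : Continuous t) (hx : Continuous x) :
    Continuous fun p => vasicekForwardMean α β σ (t p) s (x p) := by
  unfold vasicekForwardMean
  fun_prop

end Continuity

section TimeDerivatives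

variable (α : ℝ) {β : ℝ} (σ t s x : ℝ)

lemma hasDerivAt_exp_mul_sub (β t s : ℝ) :
    HasDerivAt (fun r => Real.exp (β * (s - r))) (-(β * Real.exp (β * (s - t)))) t := by
  simpa [mul_comm] using (((hasDerivAt_id t).const_sub s).const_mul β).exp

lemma hasDerivAt_vasicekSigmaSq (hβ : β ≠ 0) :
    HasDerivAt (fun r => vasicekSigmaSq β σ r s) (-(σ ^ 2 * Real.exp (β * (s - t)) ^ 2)) t := by
  refine (((hasDerivAt_exp_mul_sub (2 * β) t s).const_sub 1).const_mul
    (-(σ ^ 2 / (2 * β)))).congr_deriv ?_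
  rw [exp_two_mul_mul]
  field_simp

lemma one_sub_mul_vasicekBondSlope (hβ : β ≠ 0) :
    1 - β * vasicekBondSlope β t s = Real.exp (β * (s - t)) := by
  rw [vasicekBondSlope, mul_div_cancel₀ _ hβ, sub_sub_cancel]

lemma hasDerivAt_vasicekBondSlope (hβ : β ≠ 0) :
    HasDerivAt (fun r => vasicekBondSlope β r s) (Real.exp (β * (s - t))) t := by
  refine (((hasDerivAt_exp_mul_sub β t s).const_sub 1).div_const β).congr_deriv ?_
  field_simp

lemma hasDerivAt_vasicekBondIntercept (hβ : β ≠ 0) :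
    HasDerivAt (fun r => vasicekBondIntercept α β σ r s)
      (-(α * vasicekBondSlope β t s + σ ^ 2 / 2 * vasicekBondSlope β t s ^ 2)) t := by
  have hslope := hasDerivAt_vasicekBondSlope t s hβ
  rw [← one_sub_mul_vasicekBondSlope t s hβ] at hslope
  refine (((((hasDerivAt_id' t).const_sub s).fun_add hslope).const_mul
    (α / β + σ ^ 2 / (2 * β ^ 2))).fun_add
      ((hslope.fun_pow 2).const_mul (σ ^ 2 / (4 * β)))).congr_deriv ?_
  field_simp
  ring

lemma hasDerivAt_vasicekBond_time (hβ : β ≠ 0) :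
    HasDerivAt (fun r => vasicekBond α β σ r s x)
      (vasicekBond α β σ t s x * vasicekForwardMean α β σ t s x) t := by
  refine ((hasDerivAt_vasicekBondIntercept α σ t s hβ).fun_add
    ((hasDerivAt_vasicekBondSlope t s hβ).mul_const x)).exp.congr_deriv ?_
  rw [vasicekBond, vasicekForwardMean]
  ring

lemma hasDerivAt_vasicekForwardMean_time (hβ : β ≠ 0) :
    HasDerivAt (fun r => vasicekForwardMean α β σ r s x)
      (-(Real.exp (β * (s - t)) * (α + β * x + σ ^ 2 * vasicekBondSlope β t s))) t := by
  have hslope := hasDerivAt_vasicekBondSlope t s hβ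
  refine ((((hasDerivAt_exp_mul_sub β t s).const_mul x).fun_sub (hslope.const_mul α)).fun_sub
    ((hslope.fun_pow 2).const_mul (σ ^ 2 / 2))).congr_deriv ?_
  ring

end TimeDerivatives

lemma hasDerivAt_vasicekBond_rate (α β σ t s x : ℝ) :
    HasDerivAt (fun y => vasicekBond α β σ t s y)
      (vasicekBond α β σ t s x * vasicekBondSlope β t s) x := by
  exact ((((hasDerivAt_id' x).const_mul (vasicekBondSlope β t s)).const_add
    (vasicekBondIntercept α β σ t s)).exp).congr_deriv (by rw [vasicekBond, mul_one])

lemma hasDerivAt_vasicekForwardMean_rate (α β σ t s x : ℝ) :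
    HasDerivAt (fun y => vasicekForwardMean α β σ t s y) (Real.exp (β * (s - t))) x := by
  exact ((((hasDerivAt_id' x).mul_const (Real.exp (β * (s - t)))).sub_const
    (α * vasicekBondSlope β t s)).sub_const (σ ^ 2 / 2 * vasicekBondSlope β t s ^ 2)).congr_deriv
      (one_mul _)

/-! ### The price of the claim `g` and its derivatives -/

/-- The price at time `t` and short rate `x` of the claim paying `g` at maturity `s`: the bond price
times the expected payoff under the forward measure. Unlike the integral of `vasicekG`, it is
also meaningful at `t = s`, where it equals `g x`. -/
noncomputable def vasicekPrice (α β σ s : ℝ) (g : ℝ → ℝ) (t x : ℝ) : ℝ :=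
  vasicekBond α β σ t s x
    * gaussianMean g (vasicekForwardMean α β σ t s x) (vasicekSigmaSq β σ t s)

/-- The derivative of `vasicekPrice` in the short rate. -/
noncomputable def vasicekDelta (α β σ s : ℝ) (g : ℝ → ℝ) (t x : ℝ) : ℝ :=
  vasicekBond α β σ t s x
    * (vasicekBondSlope β t s
        * gaussianMean g (vasicekForwardMean α β σ t s x) (vasicekSigmaSq β σ t s)
      + Real.exp (β * (s - t))
        * gaussianMeanDeriv g (vasicekForwardMean α β σ t s x) (vasicekSigmaSq β σ t s))

/-- The second derivative of `vasicekPrice` in the short rate. -/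
noncomputable def vasicekGamma (α β σ s : ℝ) (g : ℝ → ℝ) (t x : ℝ) : ℝ :=
  vasicekBond α β σ t s x
    * (vasicekBondSlope β t s ^ 2
        * gaussianMean g (vasicekForwardMean α β σ t s x) (vasicekSigmaSq β σ t s)
      + 2 * vasicekBondSlope β t s * Real.exp (β * (s - t))
        * gaussianMeanDeriv g (vasicekForwardMean α β σ t s x) (vasicekSigmaSq β σ t s)
      + Real.exp (β * (s - t)) ^ 2
        * gaussianMeanDeriv₂ g (vasicekForwardMean α β σ t s x) (vasicekSigmaSq β σ t s))

lemma vasicekPrice_maturity (α β σ s : ℝ) (g : ℝ → ℝ) (x : ℝ) :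
    vasicekPrice α β σ s g s x = g x := by
  simp [vasicekPrice, vasicekBond, vasicekBondIntercept, vasicekForwardMean, vasicekBondSlope,
    vasicekSigmaSq, gaussianMean, gaussianReal_zero_var]

lemma continuousAt_vasicekPrice_maturity (α β σ s : ℝ) {g : ℝ → ℝ} (hg : Measurable g)
    (hgrow : HasExpGrowth g) {x : ℝ} (hx : ContinuousAt g x) :
    ContinuousAt (fun t => vasicekPrice α β σ s g t x) s := by
  have hbond : Continuous fun t => vasicekBond α β σ t s x := by fun_prop
  have hpath : Continuous fun t => (vasicekForwardMean α β σ t s x, vasicekSigmaSq β σ t s) := by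
    fun_prop
  refine hbond.continuousAt.mul (ContinuousAt.comp (g := fun z : ℝ × ℝ => gaussianMean g z.1 z.2)
    ?_ hpath.continuousAt)
  simpa [vasicekForwardMean, vasicekBondSlope, vasicekSigmaSq]
    using continuousAt_gaussianMean_zero hg hgrow hx

section Price

variable (α : ℝ) {β σ s t : ℝ} (hβ : β ≠ 0) (hσ : σ ≠ 0)
include hβ hσ

lemma integral_vasicekG_mul (g : ℝ → ℝ) (ht : t < s) (x : ℝ) :
    ∫ ξ, vasicekG α β σ t s x ξ * g ξ = vasicekPrice α β σ s g t x := by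
  simp only [vasicekG_eq_vasicekBond_mul_gaussianPDFReal α x hβ hσ ht, mul_assoc,
    integral_const_mul, vasicekPrice,
    gaussianMean_eq_integral_pdf g _ (vasicekSigmaSq_pos hβ hσ ht)]

variable {g : ℝ → ℝ} (hg : Measurable g) (hgrow : HasExpGrowth g)
include hg hgrow

lemma integrable_vasicekG_mul (ht : t < s) (x : ℝ) :
    Integrable fun ξ => vasicekG α β σ t s x ξ * g ξ := by
  simp only [vasicekG_eq_vasicekBond_mul_gaussianPDFReal α x hβ hσ ht, mul_assoc]
  exact (integrable_gaussianPDFReal_mul hg hgrow _ (vasicekSigmaSq_pos hβ hσ ht)).const_mul _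

lemma hasDerivAt_vasicekPrice_rate (ht : t < s) (x : ℝ) :
    HasDerivAt (fun y => vasicekPrice α β σ s g t y) (vasicekDelta α β σ s g t x) x := by
  have hmean := (hasDerivAt_gaussianMean hg hgrow (vasicekForwardMean α β σ t s x)
    (vasicekSigmaSq_pos hβ hσ ht)).comp x (hasDerivAt_vasicekForwardMean_rate α β σ t s x)
  refine ((hasDerivAt_vasicekBond_rate α β σ t s x).fun_mul hmean).congr_deriv ?_
  rw [vasicekDelta]
  simp only [Function.comp_apply]
  ring

lemma hasDerivAt_vasicekDelta_rate (ht : t < s) (x : ℝ) :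
    HasDerivAt (fun y => vasicekDelta α β σ s g t y) (vasicekGamma α β σ s g t x) x := by
  have hv := vasicekSigmaSq_pos hβ hσ ht
  have hforward := hasDerivAt_vasicekForwardMean_rate α β σ t s x
  have hmean := (hasDerivAt_gaussianMean hg hgrow _ hv).comp x hforward
  have hmean' := (hasDerivAt_gaussianMeanDeriv hg hgrow _ hv).comp x hforward
  refine ((hasDerivAt_vasicekBond_rate α β σ t s x).fun_mul
    ((hmean.const_mul (vasicekBondSlope β t s)).fun_add
      (hmean'.const_mul (Real.exp (β * (s - t)))))).congr_deriv ?_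
  rw [vasicekGamma]
  simp only [Function.comp_apply]
  ring

/-- The heat equation for `gaussianMean` turns the `Σ²`-derivative into the term
`-σ² / 2 * vasicekGamma`, up to terms of lower order. -/
lemma hasDerivAt_vasicekPrice_time (ht : t < s) (x : ℝ) :
    HasDerivAt (fun r => vasicekPrice α β σ s g r x)
      (x * vasicekPrice α β σ s g t x - (α + β * x) * vasicekDelta α β σ s g t x
        - σ ^ 2 / 2 * vasicekGamma α β σ s g t x) t := by
  have riccati := one_sub_mul_vasicekBondSlope t s hβ
  have hmean := hasDerivAt_gaussianMean_comp hg hgrow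
    (hasDerivAt_vasicekForwardMean_time α σ t s x hβ) (hasDerivAt_vasicekSigmaSq σ t s hβ)
    (vasicekSigmaSq_pos hβ hσ ht)
  refine ((hasDerivAt_vasicekBond_time α σ t s x hβ).fun_mul hmean).congr_deriv ?_
  rw [vasicekPrice, vasicekDelta, vasicekGamma]
  generalize gaussianMean g (vasicekForwardMean α β σ t s x) (vasicekSigmaSq β σ t s) = H
  rw [vasicekForwardMean]
  linear_combination vasicekBond α β σ t s x * x * H * -riccati

end Price

namespace C12On

variable {f : ℝ → ℝ → ℝ} {I J : Set ℝ}

lemma mono (hf : C12On f J) (hIJ : I ⊆ J) : C12On f I := by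
  have hprod : I ×ˢ (univ : Set ℝ) ⊆ J ×ˢ univ := prod_mono_left hIJ
  obtain ⟨hcont, htime, hspace, hcont_t, hcont_x, hcont_xx⟩ := hf
  exact ⟨hcont.mono hprod, fun x t ht => htime x t (hIJ ht), fun t ht => hspace t (hIJ ht),
    hcont_t.mono hprod, hcont_x.mono hprod, hcont_xx.mono hprod⟩

lemma congr (hf : C12On f I) (hI : IsOpen I) {f' : ℝ → ℝ → ℝ} (h : ∀ t ∈ I, f' t = f t) :
    C12On f' I := by
  have hlocal : ∀ x, ∀ t ∈ I, (fun r => f' r x) =ᶠ[𝓝 t] fun r => f r x := fun x t ht => by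
    filter_upwards [hI.mem_nhds ht] with r hr
    rw [h r hr]
  obtain ⟨hcont, htime, hspace, hcont_t, hcont_x, hcont_xx⟩ := hf
  exact ⟨hcont.congr fun p hp => by rw [h p.1 hp.1],
    fun x t ht => (htime x t ht).congr_of_eventuallyEq (hlocal x t ht),
    fun t ht => by simpa only [h t ht] using hspace t ht,
    hcont_t.congr fun p hp => (hlocal p.2 p.1 hp.1).deriv_eq,
    hcont_x.congr fun p hp => by simp only [h p.1 hp.1],
    hcont_xx.congr fun p hp => by simp only [h p.1 hp.1]⟩

lemma of_hasDerivAt {ft fx fxx : ℝ → ℝ → ℝ}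
    (htime : ∀ t ∈ I, ∀ x, HasDerivAt (fun r => f r x) (ft t x) t)
    (hspace : ∀ t ∈ I, ∀ x, HasDerivAt (fun y => f t y) (fx t x) x)
    (hspace₂ : ∀ t ∈ I, ∀ x, HasDerivAt (fun y => fx t y) (fxx t x) x)
    (hcont : ContinuousOn (fun p : ℝ × ℝ => f p.1 p.2) (I ×ˢ univ))
    (hcont_t : ContinuousOn (fun p : ℝ × ℝ => ft p.1 p.2) (I ×ˢ univ))
    (hcont_x : ContinuousOn (fun p : ℝ × ℝ => fx p.1 p.2) (I ×ˢ univ))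
    (hcont_xx : ContinuousOn (fun p : ℝ × ℝ => fxx p.1 p.2) (I ×ˢ univ)) : C12On f I := by
  have hderiv : ∀ t ∈ I, deriv (fun y => f t y) = fx t := fun t ht =>
    funext fun x => (hspace t ht x).deriv
  have hderiv₂ : ∀ t ∈ I, deriv (fx t) = fxx t := fun t ht => funext fun x => (hspace₂ t ht x).deriv
  refine ⟨hcont, fun x t ht => (htime t ht x).differentiableAt, fun t ht => ?_,
    hcont_t.congr fun p hp => (htime p.1 hp.1 p.2).deriv,
    hcont_x.congr fun p hp => (hspace p.1 hp.1 p.2).deriv,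
    hcont_xx.congr fun p hp => by rw [hderiv p.1 hp.1, hderiv₂ p.1 hp.1]⟩
  have hcont_section : Continuous (fxx t) := by
    rw [← continuousOn_univ]
    exact hcont_xx.comp (f := fun x : ℝ => (t, x)) (by fun_prop) fun x _ => ⟨ht, mem_univ x⟩
  have hfx : ContDiff ℝ 1 (fx t) := contDiff_one_iff_deriv.2
    ⟨fun x => (hspace₂ t ht x).differentiableAt, by rwa [hderiv₂ t ht]⟩
  exact (contDiff_succ_iff_deriv (n := 1)).2
    ⟨fun x => (hspace t ht x).differentiableAt, by simp, by rwa [hderiv t ht]⟩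

end C12On

section Regularity

variable (α : ℝ) {β σ s : ℝ} (hβ : β ≠ 0) (hσ : σ ≠ 0)
include hβ hσ

lemma continuousOn_comp_vasicek_law {H : ℝ → ℝ → ℝ}
    (hH : ContinuousOn (fun z : ℝ × ℝ => H z.1 z.2) {z | 0 < z.2}) :
    ContinuousOn (fun p : ℝ × ℝ =>
      H (vasicekForwardMean α β σ p.1 s p.2) (vasicekSigmaSq β σ p.1 s)) (Iio s ×ˢ univ) :=
  hH.comp (f := fun p : ℝ × ℝ =>
    (vasicekForwardMean α β σ p.1 s p.2, vasicekSigmaSq β σ p.1 s)) (by fun_prop)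
    fun p hp => vasicekSigmaSq_pos hβ hσ hp.1

lemma c12On_vasicekPrice {g : ℝ → ℝ} (hg : Measurable g) (hgrow : HasExpGrowth g) :
    C12On (vasicekPrice α β σ s g) (Iio s) := by
  have hmean := continuousOn_comp_vasicek_law α (s := s) hβ hσ (continuousOn_gaussianMean hg hgrow)
  have hmean' := continuousOn_comp_vasicek_law α (s := s) hβ hσ
    (continuousOn_gaussianMeanDeriv hg hgrow)
  have hmean'' := continuousOn_comp_vasicek_law α (s := s) hβ hσ
    (continuousOn_gaussianMeanDeriv₂ hg hgrow)
  have hprice : ContinuousOn (fun p : ℝ × ℝ => vasicekPrice α β σ s g p.1 p.2)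
      (Iio s ×ˢ univ) := by
    unfold vasicekPrice
    fun_prop
  have hdelta : ContinuousOn (fun p : ℝ × ℝ => vasicekDelta α β σ s g p.1 p.2)
      (Iio s ×ˢ univ) := by
    unfold vasicekDelta
    fun_prop
  have hgamma : ContinuousOn (fun p : ℝ × ℝ => vasicekGamma α β σ s g p.1 p.2)
      (Iio s ×ˢ univ) := by
    unfold vasicekGamma
    fun_prop
  exact .of_hasDerivAt
    (fun _ ht => hasDerivAt_vasicekPrice_time α hβ hσ hg hgrow ht)
    (fun _ ht => hasDerivAt_vasicekPrice_rate α hβ hσ hg hgrow ht)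
    (fun _ ht => hasDerivAt_vasicekDelta_rate α hβ hσ hg hgrow ht)
    hprice (by fun_prop) hdelta hgamma

end Regularity

theorem vasicek_semianalytic_solution_general {α β σ s : ℝ} (hβ : β ≠ 0) (hσ : σ ≠ 0) {g : ℝ → ℝ}
    (hg : Measurable g) (hgrow : HasExpGrowth g) {u : ℝ → ℝ → ℝ}
    (hu : ∀ t x : ℝ, u t x = ∫ ξ : ℝ, vasicekG α β σ t s x ξ * g ξ) :
    (∀ t < s, ∀ x, Integrable fun ξ => vasicekG α β σ t s x ξ * g ξ) ∧
    C12On u (Iio s) ∧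
    (∀ t < s, ∀ x, deriv (fun r => u r x) t + (α + β * x) * deriv (fun y => u t y) x
      + σ ^ 2 / 2 * deriv (deriv (fun y => u t y)) x - x * u t x = 0) ∧
    (∀ x, ContinuousAt g x → Tendsto (fun t => u t x) (𝓝[<] s) (𝓝 (g x))) := by
  have hprice : ∀ t < s, u t = vasicekPrice α β σ s g t := fun t ht => funext fun x =>
    (hu t x).trans (integral_vasicekG_mul α hβ hσ g ht x)
  refine ⟨fun t ht x => integrable_vasicekG_mul α hβ hσ hg hgrow ht x,
    (c12On_vasicekPrice α hβ hσ hg hgrow).congr isOpen_Iio hprice, fun t ht x => ?_,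
    fun x hx => ?_⟩
  · have htime : (fun r => u r x) =ᶠ[𝓝 t] fun r => vasicekPrice α β σ s g r x := by
      filter_upwards [Iio_mem_nhds ht] with r hr
      rw [hprice r hr]
    have hrate : deriv (vasicekPrice α β σ s g t) = vasicekDelta α β σ s g t :=
      funext fun y => (hasDerivAt_vasicekPrice_rate α hβ hσ hg hgrow ht y).deriv
    rw [htime.deriv_eq, (hasDerivAt_vasicekPrice_time α hβ hσ hg hgrow ht x).deriv, hprice t ht,
      hrate, (hasDerivAt_vasicekDelta_rate α hβ hσ hg hgrow ht x).deriv]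
    ring
  · have hlimit := (continuousAt_vasicekPrice_maturity α β σ s hg hgrow hx).tendsto
    rw [vasicekPrice_maturity] at hlimit
    refine (hlimit.mono_left nhdsWithin_le_nhds).congr' ?_
    filter_upwards [self_mem_nhdsWithin] with t ht
    rw [hprice t ht]

/-- The semi-analytic representation `u(t,x) = ∫ G(t,s;x,ξ)g(ξ)dξ` built from the
Vasicek Green's function solves the Vasicek pricing PDE on `[0,s) × ℝ` and attains
the terminal datum `g` as `t ↑ s`, for any continuous datum of exponential growth. -/
theorem vasicek_semianalytic_solution
    (α β σ s : ℝ) (hβ : β < 0) (hσ : 0 < σ) (hs : 0 < s)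
    (g : ℝ → ℝ) (hg : Continuous g)
    (C c : ℝ) (hC : 0 < C) (hc : 0 < c)
    (hgrow : ∀ ξ : ℝ, |g ξ| ≤ C * Real.exp (c * |ξ|))
    (u : ℝ → ℝ → ℝ)
    (hu : ∀ t x : ℝ, u t x = ∫ ξ : ℝ, vasicekG α β σ t s x ξ * g ξ) :
    (∀ t ∈ Set.Ico (0 : ℝ) s, ∀ x : ℝ,
      MeasureTheory.Integrable (fun ξ => vasicekG α β σ t s x ξ * g ξ)) ∧
    C12On u (Set.Ico (0 : ℝ) s) ∧
    (∀ t ∈ Set.Ico (0 : ℝ) s, ∀ x : ℝ,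
      deriv (fun r => u r x) t + (α + β * x) * deriv (fun y => u t y) x
        + σ ^ 2 / 2 * deriv (deriv (fun y => u t y)) x - x * u t x = 0) ∧
    (∀ x : ℝ,
      Filter.Tendsto (fun t => u t x) (nhdsWithin s (Set.Iio s)) (nhds (g x))) := by
  obtain ⟨hint, hC12, hpde, hlim⟩ :=
    vasicek_semianalytic_solution_general hβ.ne hσ.ne' hg.measurable ⟨C, c, hgrow⟩ hu
  exact ⟨fun t ht => hint t ht.2, hC12.mono Ico_subset_Iio_self, fun t ht => hpde t ht.2,
    fun x => hlim x hg.continuousAt⟩
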